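/- Let q be a prime power and n an odd integer with n | q²−1 and n > q+1. Let δ ∈ F_{q²} \ F_q have order n, with monic minimal polynomial x² − bx − c over F_q. For an integer i ≥ 2, define a₀(i) = Σ_{j=0}^{⌊(i−2)/2⌋} C(i−2−j, j) b^{i−2−2j} c^{j+1} and a₁(i) = Σ_{j=0}^{⌊(i−1)/2⌋} C(i−1−j, j) b^{i−1−2j} c^{j}. Let C ⊆ F_q[x]/(x^n − 1) be the cyclic code with generator polynomial g(x) = (x−δ^{−q})(x−δ^{−1})(x−1)(x−δ)(x−δ^q), and suppose its minimum Hamming distance equals 4. Then C is an (n,7)_q MDS symbol-pair code if and only if for every integer i with 3 ≤ i ≤ n−3, one of the following holds: (1) a₁(i) = 0; or, when a₁(i) ≠ 0: (2) if a₁(i) = 1, then a₀(i) ≠ −b or c = 1; (3) if a₀(i) = 0, then a₁(i) ≠ 1/c or b = 0; (4) if a₀(i) ≠ 0 and a₁(i) ≠ 1, then a₁(i)·c = 1 or (a₁(i)·b + a₀(i))/(a₁(i) − 1) ≠ (a₁(i)·c − 1)/a₀(i). -/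

import Mathlib

open Polynomial

/-- The pair-distance between two vectors indexed by `ZMod n`,
with indices taken modulo `n`. -/
def pairDist {n : ℕ} [NeZero n] {α : Type*} [DecidableEq α] (u v : ZMod n → α) : ℕ :=
  (Finset.univ.filter fun i : ZMod n => (u i, u (i + 1)) ≠ (v i, v (i + 1))).card

/-- A finite subset of `ZMod n` consisting of (at least one) cyclically consecutive elements. -/
def IsArc {n : ℕ} (T : Finset (ZMod n)) : Prop :=
  ∃ (a : ZMod n) (k : ℕ), 0 < k ∧ T = (Finset.range k).image fun j : ℕ => a + (j : ZMod n)

/-- `L(S)`: the minimal number of parts in a partition of `S` into nonempty sets of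
cyclically consecutive elements of `ZMod n`. -/
noncomputable def cycL {n : ℕ} (S : Finset (ZMod n)) : ℕ :=
  sInf {m | ∃ P : Finset (Finset (ZMod n)), P.card = m ∧ (∀ T ∈ P, IsArc T) ∧
    (↑P : Set (Finset (ZMod n))).PairwiseDisjoint id ∧ P.sup id = S}

/-- The polynomial `∑ i, c i * x^i` associated to a vector `c` of length `n`. -/
noncomputable def polyOf {n : ℕ} [NeZero n] {F : Type*} [Semiring F] (c : ZMod n → F) :
    Polynomial F :=
  ∑ i : ZMod n, Polynomial.C (c i) * Polynomial.X ^ i.val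

/-- `d` is the minimum pair-distance of the code `Code`. -/
def IsMinPairDist {n : ℕ} [NeZero n] {α : Type*} [DecidableEq α]
    (Code : Set (ZMod n → α)) (d : ℕ) : Prop :=
  (∀ u ∈ Code, ∀ v ∈ Code, u ≠ v → d ≤ pairDist u v) ∧
    ∃ u ∈ Code, ∃ v ∈ Code, u ≠ v ∧ pairDist u v = d

/-- The coefficient `a₀(i) = ∑_{j=0}^{⌊(i−2)/2⌋} C(i−2−j, j) b^{i−2−2j} c^{j+1}`. -/
noncomputable def aCoeff0 {F : Type*} [Field F] (b c : F) (i : ℕ) : F :=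
  ∑ j ∈ Finset.range ((i - 2) / 2 + 1),
    ((i - 2 - j).choose j : F) * b ^ (i - 2 - 2 * j) * c ^ (j + 1)

/-- The coefficient `a₁(i) = ∑_{j=0}^{⌊(i−1)/2⌋} C(i−1−j, j) b^{i−1−2j} c^{j}`. -/
noncomputable def aCoeff1 {F : Type*} [Field F] (b c : F) (i : ℕ) : F :=
  ∑ j ∈ Finset.range ((i - 1) / 2 + 1),
    ((i - 1 - j).choose j : F) * b ^ (i - 1 - 2 * j) * c ^ j

/-! Since `g` kills `δ⁻¹, 1, δ`, a nonzero word has at least `4` nonzero entries, and since `deg g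
= 5` its support does not fit in a cyclic window of length `5`. As the pair-weight is the number
of nonzero entries plus the number of cyclic runs of the support, a nonzero word of pair-weight at
most `6` is supported on a shift of `{0, 1, 2, i}` or of `{0, 1, i, i + 1}`. The first shape is
excluded by the relations at `1, δ, δ⁻¹` and the `F`-linear independence of `1, δ`. For the second
one, adding the relation at `δ` to the reversed relation at `δ⁻¹` gives `(x + w)(1 - δ)(1 - δ ^ i)
= 0`; so the entries are `x, y, -y, -x`, and such a word exists exactly when `1 - δ ^ (i + 1)` and
`δ - δ ^ i` are linearly dependent over `F`. Writing `δ ^ i = a₀(i) + a₁(i) δ`, the determinant of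
this pair in the basis `1, δ` is `(1 - a₁ c)(1 - a₁) - a₀ (a₀ + a₁ b)`, and the alternatives
(1)–(4) say that it is nonzero. -/

namespace SymbolPair

section Coefficients

variable {F : Type*} [Field F] (b c : F)

lemma aCoeff1_add_one_eq_sum {m N : ℕ} (h : m / 2 < N) :
    aCoeff1 b c (m + 1) =
      ∑ j ∈ Finset.range N, ((m - j).choose j : F) * b ^ (m - 2 * j) * c ^ j := by
  refine Finset.sum_subset (Finset.range_subset_range.2 (by omega)) fun j _ hj => ?_
  rw [Finset.mem_range, not_lt] at hj
  rw [Nat.choose_eq_zero_of_lt (by omega), Nat.cast_zero, zero_mul, zero_mul]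

lemma aCoeff1_add_three (m : ℕ) :
    aCoeff1 b c (m + 3) = b * aCoeff1 b c (m + 2) + c * aCoeff1 b c (m + 1) := by
  have pascal (j : ℕ) (hj : j < m + 1) :
      ((m + 2 - (j + 1)).choose (j + 1) : F) * b ^ (m + 2 - 2 * (j + 1)) * c ^ (j + 1) =
        b * (((m + 1 - (j + 1)).choose (j + 1) : F) * b ^ (m + 1 - 2 * (j + 1)) * c ^ (j + 1)) +
          c * (((m - j).choose j : F) * b ^ (m - 2 * j) * c ^ j) := by
    have hexp : m + 2 - 2 * (j + 1) = m - 2 * j := by omega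
    rw [show m + 2 - (j + 1) = m - j + 1 by omega, Nat.choose_succ_succ, hexp, Nat.cast_add,
      show m + 1 - (j + 1) = m - j by omega]
    rcases lt_or_ge m (2 * j + 1) with hlt | hle
    · rw [Nat.choose_eq_zero_of_lt (show m - j < j + 1 by omega), Nat.cast_zero]
      ring
    · rw [show m - 2 * j = m + 1 - 2 * (j + 1) + 1 by omega]
      ring
  rw [aCoeff1_add_one_eq_sum b c (m := m + 2) (N := m + 2) (by omega),
    aCoeff1_add_one_eq_sum b c (m := m + 1) (N := m + 2) (by omega),
    aCoeff1_add_one_eq_sum b c (m := m) (N := m + 1) (by omega),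
    Finset.sum_range_succ', Finset.sum_congr rfl fun j hj => pascal j (Finset.mem_range.1 hj),
    Finset.sum_range_succ' _ (m + 1), Finset.sum_add_distrib, ← Finset.mul_sum, ← Finset.mul_sum]
  simp only [Nat.choose_zero_right, mul_zero, Nat.sub_zero, pow_zero]
  ring

lemma aCoeff0_add_two (m : ℕ) : aCoeff0 b c (m + 2) = c * aCoeff1 b c (m + 1) := by
  rw [aCoeff0, aCoeff1, Finset.mul_sum]
  refine Finset.sum_congr rfl fun j _ => ?_
  rw [Nat.add_sub_cancel, Nat.add_sub_cancel]
  ring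

variable {b c} in
lemma pow_add_two_eq_aCoeff {A : Type*} [CommRing A] [Algebra F A] {x : A}
    (hx : x ^ 2 = algebraMap F A b * x + algebraMap F A c) (m : ℕ) :
    x ^ (m + 2) =
      algebraMap F A (aCoeff0 b c (m + 2)) + algebraMap F A (aCoeff1 b c (m + 2)) * x := by
  simp only [aCoeff0_add_two]
  induction m with
  | zero => simp [aCoeff1, hx, add_comm]
  | succ m ih =>
    rw [pow_succ, ih, aCoeff1_add_three]
    simp only [map_add, map_mul]
    linear_combination algebraMap F A (aCoeff1 b c (m + 2)) * hx

end Coefficients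

section Determinant

variable {F : Type*} [Field F] {b c A B : F}

/-- The alternatives (1)–(4) of the theorem for `A = a₀(i)` and `B = a₁(i)`. -/
def CoeffCondition (b c A B : F) : Prop :=
  B = 0 ∨ (B ≠ 0 ∧ (B = 1 → A ≠ -b ∨ c = 1) ∧ (A = 0 → B ≠ 1 / c ∨ b = 0) ∧
    (A ≠ 0 ∧ B ≠ 1 → B * c = 1 ∨ (B * b + A) / (B - 1) ≠ (B * c - 1) / A))

lemma det_ne_zero_of_coeffCondition (h : CoeffCondition b c A B)
    (hA : B = 0 → A ^ 2 ≠ 1) (h10 : ¬(B = 1 ∧ A = 0)) (hinv : ¬(B * c = 1 ∧ A + B * b = 0)) :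
    (1 - B * c) * (1 - B) ≠ A * (A + B * b) := by
  intro hdet
  obtain rfl | ⟨-, h1, h0, hgen⟩ := h
  · exact hA rfl (by linear_combination -hdet)
  by_cases hB1 : B = 1
  · subst hB1
    have hAb : A + 1 * b = 0 :=
      (mul_eq_zero.1 (by linear_combination -hdet : A * (A + 1 * b) = 0)).resolve_left
        fun hA0 => h10 ⟨rfl, hA0⟩
    rcases h1 rfl with hAne | rfl
    · exact hAne (by linear_combination hAb)
    · exact hinv ⟨one_mul 1, hAb⟩
  by_cases hA0 : A = 0
  · subst hA0
    have hBc : 1 - B * c = 0 :=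
      (mul_eq_zero.1 (by linear_combination hdet : (1 - B * c) * (1 - B) = 0)).resolve_right
        (sub_ne_zero.2 (Ne.symm hB1))
    rcases h0 rfl with hBne | rfl
    · exact hBne (eq_one_div_of_mul_eq_one_left (sub_eq_zero.1 hBc).symm)
    · exact hinv ⟨(sub_eq_zero.1 hBc).symm, by ring⟩
  rcases hgen ⟨hA0, hB1⟩ with hBc | hquot
  · have hAb : A * (A + B * b) = 0 := by linear_combination -hdet - (1 - B) * hBc
    exact hinv ⟨hBc, (mul_eq_zero.1 hAb).resolve_left hA0⟩
  · rw [ne_eq, div_eq_div_iff (sub_ne_zero.2 hB1) hA0] at hquot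
    exact hquot (by linear_combination -hdet)

lemma coeffCondition_of_det_ne_zero (hdet : (1 - B * c) * (1 - B) ≠ A * (A + B * b)) :
    CoeffCondition b c A B := by
  refine or_iff_not_imp_left.2 fun hB => ⟨hB, ?_, ?_, ?_⟩
  · rintro rfl
    exact Or.inl fun hA => hdet (by rw [hA]; ring)
  · rintro rfl
    refine Or.inl fun hBc => hdet ?_
    have hc : c ≠ 0 := fun hc => hB (by rw [hBc, hc, div_zero])
    rw [hBc, one_div_mul_cancel hc]
    ring
  · rintro ⟨hA, hB1⟩
    refine Or.inr fun hquot => hdet ?_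
    rw [div_eq_div_iff (sub_ne_zero.2 hB1) hA] at hquot
    linear_combination -hquot

end Determinant

section Independence

variable {F A : Type*} [Field F] [CommRing A] [Algebra F A] {x y : A} {b c r s : F}

lemma linearIndependent_one_sub_mul_iff (hx : LinearIndependent F ![1, x])
    (hsq : x ^ 2 = algebraMap F A b * x + algebraMap F A c)
    (hy : y = algebraMap F A r + algebraMap F A s * x) :
    LinearIndependent F ![1 - y * x, x - y] ↔ (1 - s * c) * (1 - s) ≠ r * (r + s * b) := by
  have hfst : 1 - y * x = (1 - s * c) • (1 : A) + (-(r + s * b)) • x := by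
    simp only [Algebra.smul_def, map_sub, map_neg, map_add, map_mul, map_one]
    linear_combination -x * hy - algebraMap F A s * hsq
  have hsnd : x - y = (-r) • (1 : A) + (1 - s) • x := by
    simp only [Algebra.smul_def, map_sub, map_neg, map_one]
    linear_combination -hy
  rw [hfst, hsnd, LinearIndependent.pair_add_smul_add_smul_iff (S := F), and_iff_right hx,
    neg_mul_neg, mul_comm (r + s * b)]

end Independence

section Polynomials

variable {n : ℕ} [NeZero n] {R : Type*}

lemma coeff_polyOf [Semiring R] (w : ZMod n → R) (k : ℕ) :
    (polyOf w).coeff k = if k < n then w k else 0 := by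
  simp only [polyOf, finsetSum_coeff, coeff_C_mul_X_pow]
  split_ifs with hk
  · rw [Finset.sum_eq_single (k : ZMod n)]
    · rw [if_pos (ZMod.val_cast_of_lt hk).symm]
    · rintro j - hj
      exact if_neg fun h => hj (by rw [h, ZMod.natCast_zmod_val])
    · exact fun h => absurd (Finset.mem_univ _) h
  · exact Finset.sum_eq_zero fun j _ => if_neg fun h => hk (by rw [h]; exact ZMod.val_lt j)

lemma coeff_polyOf_val [Semiring R] (w : ZMod n → R) (j : ZMod n) :
    (polyOf w).coeff j.val = w j := by
  rw [coeff_polyOf, if_pos (ZMod.val_lt j), ZMod.natCast_zmod_val]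

lemma polyOf_injective [Semiring R] :
    Function.Injective (polyOf : (ZMod n → R) → R[X]) := fun v w h => by
  ext j
  rw [← coeff_polyOf_val v, h, coeff_polyOf_val]

lemma degree_polyOf_lt [Semiring R] (w : ZMod n → R) : (polyOf w).degree < n :=
  (degree_lt_iff_coeff_zero _ _).2 fun k hk => by rw [coeff_polyOf, if_neg hk.not_gt]

/-- The vector of the coefficients of `1, X, …, X ^ (n - 1)` in a polynomial, a left inverse of
`polyOf`; coefficients of higher powers are ignored. -/
def vecOf (n : ℕ) [Semiring R] (p : R[X]) : ZMod n → R := fun j => p.coeff j.val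

lemma polyOf_vecOf [Semiring R] {p : R[X]} (hp : p.degree < n) : polyOf (vecOf n p) = p := by
  ext k
  rw [coeff_polyOf]
  split_ifs with hk
  · rw [vecOf, ZMod.val_cast_of_lt hk]
  · exact ((degree_lt_iff_coeff_zero _ _).1 hp k (not_lt.1 hk)).symm

lemma polyOf_add [Semiring R] (v w : ZMod n → R) : polyOf (v + w) = polyOf v + polyOf w := by
  simp only [polyOf, Pi.add_apply, C_add, add_mul, Finset.sum_add_distrib]

lemma polyOf_smul [Semiring R] (r : R) (w : ZMod n → R) : polyOf (r • w) = C r * polyOf w := by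
  simp only [polyOf, Pi.smul_apply, smul_eq_mul, C_mul, mul_assoc, Finset.mul_sum]

lemma aeval_polyOf [CommSemiring R] {A : Type*} [CommSemiring A] [Algebra R A] (x : A)
    (w : ZMod n → R) :
    aeval x (polyOf w) = ∑ j, algebraMap R A (w j) * x ^ j.val := by
  simp only [polyOf, map_sum, map_mul, aeval_C, map_pow, aeval_X]

lemma aeval_polyOf_of_support_subset [CommSemiring R] {A : Type*} [CommSemiring A] [Algebra R A]
    (x : A) {w : ZMod n → R} {T : Finset ℕ} (hT : ∀ k ∈ T, k < n)
    (hw : ∀ j, w j ≠ 0 → j.val ∈ T) :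
    aeval x (polyOf w) = ∑ k ∈ T, algebraMap R A (w k) * x ^ k := by
  have hsupp : (polyOf w).support ⊆ T := fun k hk => by
    rw [mem_support_iff, coeff_polyOf, ne_eq, ite_eq_right_iff, Classical.not_imp] at hk
    simpa only [ZMod.val_cast_of_lt hk.1] using hw k hk.2
  rw [aeval_def, eval₂_eq_sum, sum_eq_of_subset _ (by simp) hsupp]
  exact Finset.sum_congr rfl fun k hk => by rw [coeff_polyOf, if_pos (hT k hk)]

lemma X_pow_sub_one_dvd_polyOf_shift [CommRing R] (a : ZMod n) (w : ZMod n → R) :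
    X ^ n - 1 ∣ polyOf (fun j => w (j - a)) - X ^ a.val * polyOf w := by
  have hsum : polyOf (fun j => w (j - a)) = ∑ j, C (w j) * X ^ (j + a).val :=
    (Equiv.sum_comp (Equiv.addRight a) fun j => C (w (j - a)) * X ^ j.val).symm.trans <|
      Finset.sum_congr rfl fun j _ => by simp
  rw [hsum, polyOf, Finset.mul_sum, ← Finset.sum_sub_distrib]
  refine Finset.dvd_sum fun j _ => ?_
  have hpow : (X : R[X]) ^ n - 1 ∣ X ^ (j.val + a.val) - X ^ (j + a).val := by
    have hdiv : (X : R[X]) ^ (j.val + a.val) =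
        X ^ (j + a).val * X ^ (n * ((j.val + a.val) / n)) := by
      rw [ZMod.val_add, ← pow_add, Nat.mod_add_div]
    rw [hdiv, ← mul_sub_one]
    exact (pow_one_sub_dvd_pow_mul_sub_one _ _ _).mul_left _
  rw [show C (w j) * X ^ (j + a).val - X ^ a.val * (C (w j) * X ^ j.val) =
    -C (w j) * (X ^ (j.val + a.val) - X ^ (j + a).val) by ring]
  exact hpow.mul_left _

end Polynomials

section CyclicCode

variable {n : ℕ} [NeZero n]

/-- The cyclic code of length `n` generated by `g`, as a submodule of the words of length `n`. It
is invariant under cyclic shifts when `g` divides `X ^ n - 1`. -/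
def cyclicCode {R : Type*} [CommRing R] (n : ℕ) [NeZero n] (g : R[X]) :
    Submodule R (ZMod n → R) where
  carrier := {w | g ∣ polyOf w}
  add_mem' hv hw := by
    rw [Set.mem_ofPred_eq, polyOf_add]
    exact dvd_add hv hw
  zero_mem' := by simp [polyOf]
  smul_mem' r w hw := by
    rw [Set.mem_ofPred_eq, polyOf_smul]
    exact hw.mul_left _

lemma mem_cyclicCode {R : Type*} [CommRing R] {g : R[X]} {w : ZMod n → R} :
    w ∈ cyclicCode n g ↔ g ∣ polyOf w :=
  Iff.rfl

lemma shift_mem_cyclicCode {R : Type*} [CommRing R] {g : R[X]} (hg : g ∣ X ^ n - 1)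
    {w : ZMod n → R} (hw : w ∈ cyclicCode n g) (a : ZMod n) :
    (fun j => w (j - a)) ∈ cyclicCode n g :=
  (dvd_iff_dvd_of_dvd_sub (hg.trans (X_pow_sub_one_dvd_polyOf_shift a w))).2
    ((mem_cyclicCode.1 hw).mul_left _)

variable {F : Type*} [Field F] {g : F[X]}

lemma eq_zero_of_mem_cyclicCode_of_support (hg : g ∣ X ^ n - 1) {w : ZMod n → F}
    (hw : w ∈ cyclicCode n g) {a : ZMod n} (ha : ∀ j, w j ≠ 0 → (j - a).val < g.natDegree) :
    w = 0 := by
  have hg0 : g ≠ 0 := ne_zero_of_dvd_ne_zero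
    (by simpa only [C_1] using X_pow_sub_C_ne_zero (NeZero.pos n) (1 : F)) hg
  have hdeg : (polyOf fun j => w (j - -a)).degree < g.degree := by
    rw [degree_eq_natDegree hg0, degree_lt_iff_coeff_zero]
    intro k hk
    rw [coeff_polyOf]
    split_ifs with hkn
    · by_contra hne
      have := ha _ hne
      rw [sub_neg_eq_add, add_sub_cancel_right, ZMod.val_cast_of_lt hkn] at this
      exact this.not_ge hk
    · rfl
  have hpoly := eq_zero_of_dvd_of_degree_lt (shift_mem_cyclicCode hg hw (-a)) hdeg
  ext j
  have hcoeff := coeff_polyOf_val (fun j => w (j - -a)) (j - a)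
  rwa [hpoly, coeff_zero, sub_neg_eq_add, sub_add_cancel, eq_comm] at hcoeff

lemma vecOf_mem_cyclicCode {p : F[X]} (hp : p.degree < n) (hgp : g ∣ p) :
    vecOf n p ∈ cyclicCode n g := by
  rwa [mem_cyclicCode, polyOf_vecOf hp]

lemma natCard_cyclicCode (hg0 : g ≠ 0) (hgn : g.natDegree ≤ n) :
    Nat.card (cyclicCode n g) = Nat.card F ^ (n - g.natDegree) := by
  have hdeg {f : F[X]} : (g * f).degree < n ↔ f ∈ degreeLT F (n - g.natDegree) := by
    rw [mem_degreeLT]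
    rcases eq_or_ne f 0 with rfl | hf
    · simp
    · rw [← natDegree_lt_iff_degree_lt (mul_ne_zero hg0 hf), ← natDegree_lt_iff_degree_lt hf,
        natDegree_mul hg0 hf]
      omega
  let encode (f : degreeLT F (n - g.natDegree)) : cyclicCode n g :=
    ⟨vecOf n (g * f), vecOf_mem_cyclicCode (hdeg.2 f.2) (dvd_mul_right g f)⟩
  have hencode (f) : polyOf (encode f : ZMod n → F) = g * f := polyOf_vecOf (hdeg.2 f.2)
  have hbij : Function.Bijective encode := by
    refine ⟨fun f f' h => Subtype.ext (mul_left_cancel₀ hg0 ?_), fun w => ?_⟩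
    · rw [← hencode, ← hencode, h]
    · obtain ⟨f, hf⟩ := mem_cyclicCode.1 w.2
      refine ⟨⟨f, hdeg.1 (hf ▸ degree_polyOf_lt w.1)⟩, Subtype.ext (polyOf_injective ?_)⟩
      exact (hencode _).trans hf.symm
  rw [← Nat.card_eq_of_bijective encode hbij, Nat.card_congr (degreeLTEquiv F _).toEquiv,
    Nat.card_fun, Nat.card_fin]

end CyclicCode

section PairDistance

variable {n : ℕ}

/-- The initial points of the maximal cyclic runs of a subset of `ZMod n`; their number is that of
the runs, except that the whole of `ZMod n` has none. -/
def arcStarts (S : Finset (ZMod n)) : Finset (ZMod n) :=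
  {s ∈ S | s - 1 ∉ S}

lemma mem_arcStarts {S : Finset (ZMod n)} {s : ZMod n} : s ∈ arcStarts S ↔ s ∈ S ∧ s - 1 ∉ S :=
  Finset.mem_filter

lemma arcStarts_subset (S : Finset (ZMod n)) : arcStarts S ⊆ S :=
  Finset.filter_subset _ _

lemma card_union_image_sub_one (S : Finset (ZMod n)) :
    (S ∪ S.image (· - 1)).card = S.card + (arcStarts S).card := by
  have hunion : S ∪ S.image (· - 1) = S ∪ (arcStarts S).image (· - 1) := by
    ext j
    simp only [arcStarts, Finset.mem_union, Finset.mem_image, Finset.mem_filter]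
    grind
  have hdisj : Disjoint S ((arcStarts S).image (· - 1)) := by
    rw [Finset.disjoint_right]
    rintro j hj
    obtain ⟨s, hs, rfl⟩ := Finset.mem_image.1 hj
    exact (mem_arcStarts.1 hs).2
  rw [hunion, Finset.card_union_of_disjoint hdisj,
    Finset.card_image_of_injective _ (sub_left_injective (b := (1 : ZMod n)))]

variable [NeZero n]

lemma val_sub_lt_card_of_arcStarts_subset {S : Finset (ZMod n)} {a s : ZMod n}
    (ha : arcStarts S ⊆ {a}) (hs : s ∈ S) : (s - a).val < S.card := by
  have hmem : ∀ k ≤ (s - a).val, s - k ∈ S := by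
    intro k hk
    induction k with
    | zero => simpa using hs
    | succ k ih =>
      by_contra hnot
      have hstart : s - k ∈ arcStarts S :=
        mem_arcStarts.2 ⟨ih (by omega), by rwa [sub_sub, ← Nat.cast_succ]⟩
      have hsa : s - a = k := by rw [← Finset.mem_singleton.1 (ha hstart), sub_sub_cancel]
      rw [hsa, ZMod.val_natCast] at hk
      exact (Nat.mod_le k n).not_gt hk
  have hinj : Set.InjOn (fun k : ℕ => s - k) (Finset.range ((s - a).val + 1)) := by
    intro k hk l hl hkl
    rw [Finset.coe_range, Set.mem_Iio, Nat.lt_succ_iff] at hk hl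
    have hval := congrArg ZMod.val (sub_right_injective hkl)
    rwa [ZMod.val_cast_of_lt (hk.trans_lt (ZMod.val_lt _)),
      ZMod.val_cast_of_lt (hl.trans_lt (ZMod.val_lt _))] at hval
  simpa using Finset.card_le_card_of_injOn _
    (fun k hk => hmem k (Nat.lt_succ_iff.1 (Finset.mem_range.1 hk))) hinj

lemma arcStarts_nonempty {S : Finset (ZMod n)} (hS : S.Nonempty) (hn : S.card < n) :
    (arcStarts S).Nonempty := by
  obtain ⟨s, hs⟩ := hS
  by_contra hempty
  have hval := val_sub_lt_card_of_arcStarts_subset (a := s + 1)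
    (by rw [Finset.not_nonempty_iff_eq_empty.1 hempty]; exact Finset.empty_subset _) hs
  rw [sub_add_cancel_left] at hval
  obtain ⟨m, rfl⟩ := Nat.exists_eq_succ_of_ne_zero (NeZero.ne n)
  rw [ZMod.val_neg_one] at hval
  omega

variable {α : Type*} [DecidableEq α]

lemma pairDist_eq_card_union (u v : ZMod n → α) :
    pairDist u v =
      ((Finset.univ.filter fun i => u i ≠ v i) ∪
        (Finset.univ.filter fun i => u i ≠ v i).image (· - 1)).card := by
  rw [pairDist]
  congr 1
  ext i
  simp only [ne_eq, Prod.mk.injEq, Finset.mem_filter, Finset.mem_univ, true_and, Finset.mem_union,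
    Finset.mem_image, not_and_or]
  exact or_congr_right ⟨fun h => ⟨i + 1, h, add_sub_cancel_right i 1⟩,
    fun ⟨j, hj, hji⟩ => by rwa [← hji, sub_add_cancel]⟩

lemma pairDist_eq_card_add_card_arcStarts (u v : ZMod n → α) :
    pairDist u v = (Finset.univ.filter fun i => u i ≠ v i).card +
      (arcStarts (Finset.univ.filter fun i => u i ≠ v i)).card := by
  rw [pairDist_eq_card_union, card_union_image_sub_one]

lemma pairDist_le_card_union {u v : ZMod n → α} {T : Finset (ZMod n)}
    (hT : ∀ j, u j ≠ v j → j ∈ T) : pairDist u v ≤ (T ∪ T.image (· - 1)).card := by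
  have hsub : (Finset.univ.filter fun i => u i ≠ v i) ⊆ T := fun j hj =>
    hT j (Finset.mem_filter.1 hj).2
  rw [pairDist_eq_card_union]
  exact Finset.card_le_card (Finset.union_subset_union hsub (Finset.image_subset_image hsub))

lemma pairDist_le_of_val_lt {u v : ZMod n → α} {m : ℕ} (hm : ∀ j, u j ≠ v j → j.val < m) :
    pairDist u v ≤ m + 1 := by
  have hsub : (Finset.univ.filter fun i => u i ≠ v i) ∪
      (Finset.univ.filter fun i => u i ≠ v i).image (· - 1) ⊆
        (Finset.range (m + 1)).image fun k : ℕ => (k : ZMod n) - 1 := by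
    intro i hi
    simp only [Finset.mem_union, Finset.mem_image, Finset.mem_filter, Finset.mem_univ, true_and,
      Finset.mem_range] at hi ⊢
    obtain hi | ⟨j, hj, rfl⟩ := hi
    · exact ⟨i.val + 1, Nat.succ_lt_succ (hm i hi), by simp⟩
    · exact ⟨j.val, (hm j hj).trans m.lt_succ_self, by simp⟩
  rw [pairDist_eq_card_union]
  exact (Finset.card_le_card hsub).trans (Finset.card_image_le.trans (Finset.card_range _).le)

lemma pairDist_eq_pairDist_sub_zero {G : Type*} [AddGroup G] [DecidableEq G] (u v : ZMod n → G) :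
    pairDist u v = pairDist (u - v) 0 := by
  simp only [pairDist_eq_card_union, Pi.sub_apply, Pi.zero_apply, ne_eq, sub_eq_zero]

end PairDistance

section FourPoints

variable {n : ℕ} {S : Finset (ZMod n)}

lemma sub_one_mem_of_mem_sdiff_arcStarts {s : ZMod n} (hs : s ∈ S \ arcStarts S) : s - 1 ∈ S := by
  obtain ⟨hsS, hsA⟩ := Finset.mem_sdiff.1 hs
  simpa only [mem_arcStarts, hsS, true_and, not_not] using hsA

variable [NeZero n]

lemma exists_mem_arcStarts_add_one_mem (hlt : (arcStarts S).card < S.card) (hn : S.card < n) :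
    ∃ a ∈ arcStarts S, a + 1 ∈ S := by
  obtain ⟨x, hxS, hxA⟩ := Finset.exists_mem_notMem_of_card_lt_card hlt
  obtain ⟨y, hy⟩ := arcStarts_nonempty (S := S \ arcStarts S) ⟨x, Finset.mem_sdiff.2 ⟨hxS, hxA⟩⟩
    ((Finset.card_le_card Finset.sdiff_subset).trans_lt hn)
  obtain ⟨hyN, hpred⟩ := mem_arcStarts.1 hy
  have hpredS := sub_one_mem_of_mem_sdiff_arcStarts hyN
  exact ⟨y - 1, by simpa only [Finset.mem_sdiff, hpredS, true_and, not_not] using hpred,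
    by rw [sub_add_cancel]; exact (Finset.mem_sdiff.1 hyN).1⟩

lemma exists_eq_of_card_eq_four (hn : 4 < n) (hS : S.card = 4) (hstarts : (arcStarts S).card = 2) :
    ∃ a d : ZMod n, a ≠ d ∧ a - 1 ∉ S ∧ d - 1 ∉ S ∧
      (S = {a, a + 1, a + 2, d} ∨ S = {a, a + 1, d, d + 1}) := by
  obtain ⟨a, haA, haS⟩ := exists_mem_arcStarts_add_one_mem (by omega) (hS.trans_lt hn)
  obtain ⟨d, hd⟩ := Finset.card_eq_one.1
    ((Finset.card_erase_of_mem haA).trans (congrArg (· - 1) hstarts))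
  have haN : a + 1 ∈ S \ arcStarts S := by
    refine Finset.mem_sdiff.2 ⟨haS, fun h => (mem_arcStarts.1 h).2 ?_⟩
    rw [add_sub_cancel_right]
    exact (mem_arcStarts.1 haA).1
  have hN : (S \ arcStarts S).card = 2 := by
    rw [Finset.card_sdiff_of_subset (arcStarts_subset S), hS, hstarts]
  obtain ⟨y, hy⟩ := Finset.card_eq_one.1
    ((Finset.card_erase_of_mem haN).trans (congrArg (· - 1) hN))
  obtain ⟨hda, hdA⟩ := Finset.mem_erase.1 (hd ▸ Finset.mem_singleton_self d)
  obtain ⟨hya, hyN⟩ := Finset.mem_erase.1 (hy ▸ Finset.mem_singleton_self y)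
  have hA : arcStarts S = {a, d} := by rw [← Finset.insert_erase haA, hd]
  have hSeq : S = {a, a + 1, d, y} := by
    rw [← Finset.union_sdiff_of_subset (arcStarts_subset S), ← Finset.insert_erase haN, hy, hA,
      Finset.insert_union, Finset.singleton_union, Finset.insert_comm d]
  refine ⟨a, d, hda.symm, (mem_arcStarts.1 haA).2, (mem_arcStarts.1 hdA).2, ?_⟩
  have hpred := hSeq ▸ sub_one_mem_of_mem_sdiff_arcStarts hyN
  simp only [Finset.mem_insert, Finset.mem_singleton, sub_eq_iff_eq_add] at hpred
  have : Fact (1 < n) := ⟨by omega⟩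
  rcases hpred with rfl | rfl | rfl | h
  · exact absurd rfl hya
  · exact Or.inl (by rw [hSeq, add_assoc, one_add_one_eq_two, Finset.pair_comm])
  · exact Or.inr hSeq
  · exact absurd (left_eq_add.1 h) one_ne_zero

lemma exists_eq_image_of_card_eq_four (hn : 4 < n) (hS : S.card = 4)
    (hstarts : (arcStarts S).card = 2) :
    ∃ (a : ZMod n) (i : ℕ), 3 ≤ i ∧
      ((i < n ∧ S = ({0, 1, 2, i} : Finset ℕ).image fun k : ℕ => a + k) ∨
        (i ≤ n - 3 ∧ S = ({0, 1, i, i + 1} : Finset ℕ).image fun k : ℕ => a + k)) := by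
  obtain ⟨a, d, had, ha, hd, hruns⟩ := exists_eq_of_card_eq_four hn hS hstarts
  obtain ⟨i, hin, rfl⟩ : ∃ i < n, d = a + (i : ℕ) :=
    ⟨(d - a).val, ZMod.val_lt _, by rw [ZMod.natCast_zmod_val, add_sub_cancel]⟩
  have ha0 : a ∈ S := by rcases hruns with rfl | rfl <;> simp
  have ha1 : a + 1 ∈ S := by rcases hruns with rfl | rfl <;> simp
  have hi0 : i ≠ 0 := by
    rintro rfl
    simp at had
  have hi1 : i ≠ 1 := by
    rintro rfl
    rw [Nat.cast_one, add_sub_cancel_right] at hd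
    exact hd ha0
  have hi2 : i ≠ 2 := by
    rintro rfl
    rw [Nat.cast_two, ← one_add_one_eq_two, ← add_assoc, add_sub_cancel_right] at hd
    exact hd ha1
  refine ⟨a, i, by omega, hruns.imp (fun h => ⟨hin, ?_⟩) fun h => ⟨?_, ?_⟩⟩
  · simpa using h
  · have hwrap (k : ℕ) (hk : i + k = n) : a + i = a - k := by
      rw [eq_sub_iff_add_eq, add_assoc, ← Nat.cast_add, hk, ZMod.natCast_self, add_zero]
    have hi_sub_one : i + 1 ≠ n := fun hk => ha <| by
      rw [h, ← Nat.cast_one, ← hwrap 1 hk]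
      simp
    have hi_sub_two : i + 2 ≠ n := fun hk => ha <| by
      have hpred : a + i + 1 = a - 1 := by rw [hwrap 2 hk, Nat.cast_two]; ring
      rw [h, ← hpred]
      simp
    omega
  · simpa [add_assoc] using h

end FourPoints

section BCH

variable {n : ℕ} [NeZero n] {F E : Type*} [Field F] [DecidableEq F] [Field E] [Algebra F E]

lemma lt_hammingNorm_of_aeval_polyOf_eq_zero {a ρ : E} (ha : a ≠ 0) (hρ : orderOf ρ = n) {m : ℕ}
    {w : ZMod n → F} (hw : w ≠ 0) (hzero : ∀ k < m, aeval (a * ρ ^ k) (polyOf w) = 0) :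
    m < hammingNorm w := by
  by_contra! hle
  set S : Finset (ZMod n) := {j | w j ≠ 0} with hS
  let e := S.equivFin
  let coef (i : Fin S.card) : E := algebraMap F E (w (e.symm i)) * a ^ (e.symm i : ZMod n).val
  have hinj : Function.Injective fun i : Fin S.card => ρ ^ (e.symm i : ZMod n).val :=
    fun i j hij => e.symm.injective <| Subtype.ext <| ZMod.val_injective n <|
      pow_injOn_Iio_orderOf (by rw [hρ]; exact ZMod.val_lt _) (by rw [hρ]; exact ZMod.val_lt _) hij
  have hvandermonde : coef = 0 := by
    refine Matrix.eq_zero_of_forall_pow_sum_mul_pow_eq_zero hinj fun k => ?_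
    have hk := hzero k (k.2.trans_le hle)
    rw [aeval_polyOf, ← Finset.sum_subset S.subset_univ, ← Finset.sum_coe_sort, ← e.symm.sum_comp]
      at hk
    · rw [← hk]
      refine Finset.sum_congr rfl fun i _ => ?_
      simp only [coef]
      ring
    · intro j _ hj
      simp only [hS, Finset.mem_filter, Finset.mem_univ, true_and, not_not] at hj
      rw [hj, map_zero, zero_mul]
  obtain ⟨j, hj⟩ := Function.ne_iff.1 hw
  have hjS : j ∈ S := Finset.mem_filter.2 ⟨Finset.mem_univ j, hj⟩
  have hcoef := congrFun hvandermonde (e ⟨j, hjS⟩)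
  simp only [coef, Equiv.symm_apply_apply, Pi.zero_apply, mul_eq_zero, map_eq_zero] at hcoef
  exact hcoef.elim hj (pow_ne_zero _ ha)

end BCH

section Generator

variable {F E : Type*} [Field F] [Field E] [Algebra F E]

lemma natDegree_minpoly_inv {x : E} (hx : IsIntegral F x) :
    (minpoly F x⁻¹).natDegree = (minpoly F x).natDegree := by
  have hadjoin : IntermediateField.adjoin F {x⁻¹} = IntermediateField.adjoin F {x} := by
    refine le_antisymm (IntermediateField.adjoin_simple_le_iff.2 ?_)
      (IntermediateField.adjoin_simple_le_iff.2 ?_)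
    · exact inv_mem (IntermediateField.mem_adjoin_simple_self F x)
    · simpa only [inv_inv] using inv_mem (IntermediateField.mem_adjoin_simple_self F x⁻¹)
  rw [← IntermediateField.adjoin.finrank hx, ← IntermediateField.adjoin.finrank hx.inv, hadjoin]

lemma isIntegral_of_natDegree_minpoly_eq_two {x : E} (hdeg : (minpoly F x).natDegree = 2) :
    IsIntegral F x :=
  minpoly.ne_zero_iff.1 (ne_zero_of_natDegree_gt (n := 0) (hdeg.symm ▸ two_pos))

lemma isCoprime_minpoly_of_ne {x y : E} (hx : IsIntegral F x) (hy : IsIntegral F y)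
    (hne : minpoly F x ≠ minpoly F y) : IsCoprime (minpoly F x) (minpoly F y) := by
  rw [(minpoly.irreducible hx).coprime_iff_not_dvd]
  intro hdvd
  exact hne (eq_of_monic_of_associated (minpoly.monic hx) (minpoly.monic hy)
    ((minpoly.irreducible hx).associated_of_dvd (minpoly.irreducible hy) hdvd))

/-- The generator polynomial `(x − δ^{−q})(x − δ^{−1})(x − 1)(x − δ)(x − δ^q)` of the code, written
over `F = F_q`: its first two and its last two factors multiply to the minimal polynomials of `δ⁻¹`
and `δ`. In this form it makes sense over any field. -/
noncomputable def bchGenerator (F : Type*) {E : Type*} [Field F] [Field E] [Algebra F E]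
    (δ : E) : F[X] :=
  minpoly F δ⁻¹ * (X - 1) * minpoly F δ

variable {δ : E}

lemma natDegree_bchGenerator (hδ : IsIntegral F δ) :
    (bchGenerator F δ).natDegree = 2 * (minpoly F δ).natDegree + 1 := by
  have hX : (X - 1 : F[X]).Monic := monic_X_sub_C 1
  have hinv := minpoly.monic hδ.inv
  rw [bchGenerator, (hinv.mul hX).natDegree_mul (minpoly.monic hδ), hinv.natDegree_mul hX,
    natDegree_minpoly_inv hδ, ← C_1, natDegree_X_sub_C]
  ring

lemma mul_dvd_iff_of_isCoprime {R : Type*} [CommSemiring R] {x y z : R} (h : IsCoprime x y) :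
    x * y ∣ z ↔ x ∣ z ∧ y ∣ z :=
  ⟨fun hz => ⟨dvd_of_mul_right_dvd hz, dvd_of_mul_left_dvd hz⟩, fun hz => h.mul_dvd hz.1 hz.2⟩

lemma bchGenerator_dvd_iff (hδ : IsIntegral F δ) (hone : δ ≠ 1)
    (hinv : minpoly F δ⁻¹ ≠ minpoly F δ) {p : F[X]} :
    bchGenerator F δ ∣ p ↔ aeval δ⁻¹ p = 0 ∧ aeval (1 : E) p = 0 ∧ aeval δ p = 0 := by
  have hone_ne {x : E} (hx : x ≠ 1) : minpoly F x ≠ minpoly F (1 : E) := fun h => hx <| by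
    have hroot := minpoly.aeval F x
    rwa [h, minpoly.one, map_sub, aeval_X, map_one, sub_eq_zero] at hroot
  have hcop₁ := isCoprime_minpoly_of_ne hδ.inv isIntegral_one
    (hone_ne (inv_ne_one.2 hone))
  have hcop₂ := (isCoprime_minpoly_of_ne hδ.inv hδ hinv).mul_left
    (isCoprime_minpoly_of_ne isIntegral_one hδ (hone_ne hone).symm)
  rw [bchGenerator, ← minpoly.one F E, mul_dvd_iff_of_isCoprime hcop₂,
    mul_dvd_iff_of_isCoprime hcop₁, ← minpoly.dvd_iff, ← minpoly.dvd_iff, ← minpoly.dvd_iff,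
    and_assoc]

lemma bchGenerator_dvd_X_pow_sub_one (hδ : IsIntegral F δ) (hone : δ ≠ 1)
    (hinv : minpoly F δ⁻¹ ≠ minpoly F δ) {n : ℕ} (hn : δ ^ n = 1) :
    bchGenerator F δ ∣ X ^ n - 1 := by
  simp [bchGenerator_dvd_iff hδ hone hinv, hn]

section Quadratic

variable {b c : F}

lemma natDegree_minpoly_eq_two (hmin : minpoly F δ = X ^ 2 - C b * X - C c) :
    (minpoly F δ).natDegree = 2 := by
  rw [hmin]
  compute_degree!

lemma sq_eq_of_minpoly_eq (hmin : minpoly F δ = X ^ 2 - C b * X - C c) :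
    δ ^ 2 = algebraMap F E b * δ + algebraMap F E c := by
  have hroot := minpoly.aeval F δ
  simp only [hmin, map_sub, map_mul, map_pow, aeval_X, aeval_C] at hroot
  linear_combination hroot

lemma linearIndependent_one_of_natDegree_minpoly_eq_two (hdeg : (minpoly F δ).natDegree = 2) :
    LinearIndependent F ![1, δ] := by
  refine (LinearIndependent.pair_iff' one_ne_zero).2 fun r hr => ?_
  rw [← hr, ← Algebra.algebraMap_eq_smul_one, minpoly.eq_X_sub_C, natDegree_X_sub_C] at hdeg
  exact absurd hdeg (by decide)

lemma minpoly_inv_ne (hmin : minpoly F δ = X ^ 2 - C b * X - C c) (hsq : δ ^ 2 ≠ 1)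
    (hc : c ≠ -1) : minpoly F δ⁻¹ ≠ minpoly F δ := by
  intro h
  have hδ := sq_eq_of_minpoly_eq hmin
  have hδinv := sq_eq_of_minpoly_eq (h.trans hmin)
  have hind := linearIndependent_one_of_natDegree_minpoly_eq_two (natDegree_minpoly_eq_two hmin)
  have hδ0 : δ ≠ 0 := hind.ne_zero 1
  have hcomb : (c ^ 2 - 1) • (1 : E) + (b * (c + 1)) • δ = 0 := by
    field_simp at hδinv
    simp only [Algebra.smul_def, map_mul, map_add, map_sub, map_pow, map_one]
    linear_combination -hδinv - algebraMap F E c * hδ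
  obtain ⟨hc2, hb⟩ := LinearIndependent.pair_iff.1 hind _ _ hcomb
  have hb0 : b = 0 := (mul_eq_zero.1 hb).resolve_right fun h0 => hc (eq_neg_of_add_eq_zero_left h0)
  have hc1 : c = 1 := (sq_eq_one_iff.1 (sub_eq_zero.1 hc2)).resolve_right hc
  exact hsq (by simp [hδ, hb0, hc1])

end Quadratic

section Frobenius

variable [Fintype F]

lemma map_minpoly_eq_mul_frobenius {x : E} (hdeg : (minpoly F x).natDegree = 2)
    (hx : x ^ Fintype.card F ≠ x) :
    (minpoly F x).map (algebraMap F E) = (X - C x) * (X - C (x ^ Fintype.card F)) := by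
  have hmonic : (minpoly F x).Monic :=
    minpoly.monic (isIntegral_of_natDegree_minpoly_eq_two hdeg)
  have hconj : aeval (x ^ Fintype.card F) (minpoly F x) = 0 := by
    have h := aeval_algHom_apply (FiniteField.frobeniusAlgHom F E) x (minpoly F x)
    rwa [minpoly.aeval, map_zero, FiniteField.coe_frobeniusAlgHom] at h
  refine eq_of_monic_of_dvd_of_natDegree_le ((monic_X_sub_C _).mul (monic_X_sub_C _))
    (hmonic.map _) (IsCoprime.mul_dvd ?_ ?_ ?_) ?_
  · exact isCoprime_X_sub_C_of_isUnit_sub (sub_ne_zero.2 hx.symm).isUnit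
  · rw [dvd_iff_isRoot, IsRoot, eval_map_algebraMap, minpoly.aeval]
  · rw [dvd_iff_isRoot, IsRoot, eval_map_algebraMap, hconj]
  · rw [hmonic.natDegree_map, hdeg, (monic_X_sub_C x).natDegree_mul (monic_X_sub_C _),
      natDegree_X_sub_C, natDegree_X_sub_C]

lemma map_bchGenerator (hdeg : (minpoly F δ).natDegree = 2) (hfrob : δ ^ Fintype.card F ≠ δ) :
    (bchGenerator F δ).map (algebraMap F E) =
      (X - C (δ⁻¹ ^ Fintype.card F)) * (X - C δ⁻¹) * (X - 1) * (X - C δ) *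
        (X - C (δ ^ Fintype.card F)) := by
  have hδ := isIntegral_of_natDegree_minpoly_eq_two hdeg
  have hfrob' : δ⁻¹ ^ Fintype.card F ≠ δ⁻¹ := by rwa [inv_pow, ne_eq, inv_inj]
  rw [bchGenerator, Polynomial.map_mul, Polynomial.map_mul, Polynomial.map_sub, map_X,
    Polynomial.map_one, map_minpoly_eq_mul_frobenius hdeg hfrob,
    map_minpoly_eq_mul_frobenius ((natDegree_minpoly_inv hδ).trans hdeg) hfrob']
  ring

lemma pow_card_add_one_eq_neg {b c : F} (hmin : minpoly F δ = X ^ 2 - C b * X - C c)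
    (hfrob : δ ^ Fintype.card F ≠ δ) : δ ^ (Fintype.card F + 1) = algebraMap F E (-c) := by
  have hdeg := natDegree_minpoly_eq_two hmin
  have heval := congrArg (eval 0) (map_minpoly_eq_mul_frobenius hdeg hfrob)
  simp only [hmin, eval_map_algebraMap, map_sub, map_mul, map_pow, aeval_X, aeval_C, eval_mul,
    eval_sub, eval_pow, eval_X, eval_C] at heval
  rw [map_neg]
  linear_combination -heval

end Frobenius

end Generator

section Relations

variable {E : Type*} [Field E] {δ θ x y z w : E}

-- With `P = w(θ - 1)` and `Q = w(θ⁻¹ - 1)` one has `PQ = -w(P + Q)`, which eliminates `θ`; `y` is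
-- eliminated by the first relation, and the common factor `(1 - δ)(1 - δ⁻¹)` cancels.
lemma mul_mul_sq_add_one_eq (hδ0 : δ ≠ 0) (hδ1 : δ ≠ 1) (hθ0 : θ ≠ 0)
    (hone : x + y + z + w = 0) (hδ : x + y * δ + z * δ ^ 2 + w * θ = 0)
    (hinv : x + y * δ⁻¹ + z * δ⁻¹ ^ 2 + w * θ⁻¹ = 0) :
    x * z * (δ ^ 2 + 1) = (w * (x + z) + x ^ 2 + z ^ 2) * δ := by
  have ht : θ * θ⁻¹ = 1 := mul_inv_cancel₀ hθ0
  have hP : w * (θ - 1) = (1 - δ) * (z * δ - x - w) := by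
    linear_combination hδ - δ * hone
  have hQ : w * (θ⁻¹ - 1) = (1 - δ⁻¹) * (z * δ⁻¹ - x - w) := by
    linear_combination hinv - δ⁻¹ * hone
  have hPQ : w * (θ - 1) * (w * (θ⁻¹ - 1)) = -w * (w * (θ - 1) + w * (θ⁻¹ - 1)) := by
    linear_combination w ^ 2 * ht
  rw [hP, hQ] at hPQ
  have hcancel : (1 - δ) ^ 2 * (x * z * (δ ^ 2 + 1)) =
      (1 - δ) ^ 2 * ((w * (x + z) + x ^ 2 + z ^ 2) * δ) := by
    field_simp at hPQ
    linear_combination hPQ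
  exact mul_left_cancel₀ (pow_ne_zero 2 (sub_ne_zero.2 hδ1.symm)) hcancel

-- Adding the relation at `δ` to `δθ` times the relation at `δ⁻¹` leaves
-- `(x + w)(1 + δθ) + (y + z)(δ + θ) = 0`.
lemma add_eq_zero_of_relations (hδ0 : δ ≠ 0) (hδ1 : δ ≠ 1) (hθ0 : θ ≠ 0) (hθ1 : θ ≠ 1)
    (hone : x + y + z + w = 0) (hδ : x + y * δ + z * θ + w * (θ * δ) = 0)
    (hinv : x + y * δ⁻¹ + z * θ⁻¹ + w * (θ⁻¹ * δ⁻¹) = 0) : x + w = 0 := by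
  have hrev : x * (θ * δ) + y * θ + z * δ + w = 0 := by
    field_simp at hinv
    linear_combination hinv
  have hprod : (1 - δ) * (1 - θ) * (x + w) = 0 := by
    linear_combination hδ + hrev - (δ + θ) * hone
  exact (mul_eq_zero.1 hprod).resolve_left
    (mul_ne_zero (sub_ne_zero.2 hδ1.symm) (sub_ne_zero.2 hθ1.symm))

end Relations

section MinPairDist

variable {n : ℕ} [NeZero n] {F : Type*} [Field F]

lemma isMinPairDist_cyclicCode_iff [DecidableEq F] {g : F[X]} (hg0 : g ≠ 0)
    (hgn : g.natDegree < n) :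
    IsMinPairDist (cyclicCode n g : Set (ZMod n → F)) (g.natDegree + 2) ↔
      ∀ w ∈ cyclicCode n g, w ≠ 0 → g.natDegree + 2 ≤ pairDist w 0 := by
  refine ⟨fun h w hw hw0 => h.1 w hw 0 (zero_mem _) hw0, fun h => ?_⟩
  have hle : ∀ u ∈ cyclicCode n g, ∀ v ∈ cyclicCode n g, u ≠ v →
      g.natDegree + 2 ≤ pairDist u v := fun u hu v hv huv => by
    rw [pairDist_eq_pairDist_sub_zero]
    exact h _ (sub_mem hu hv) (sub_ne_zero.2 huv)
  have hmem : vecOf n g ∈ cyclicCode n g :=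
    vecOf_mem_cyclicCode ((natDegree_lt_iff_degree_lt hg0).1 hgn) dvd_rfl
  have hne : vecOf n g ≠ 0 := fun h0 => leadingCoeff_ne_zero.2 hg0 <| by
    simpa only [vecOf, ZMod.val_cast_of_lt hgn, coeff_natDegree, Pi.zero_apply] using
      congrFun h0 (g.natDegree : ZMod n)
  have hupper : pairDist (vecOf n g) 0 ≤ g.natDegree + 1 + 1 :=
    pairDist_le_of_val_lt fun j hj => Nat.lt_succ_of_le (le_natDegree_of_ne_zero hj)
  exact ⟨hle, _, hmem, 0, zero_mem _, hne, hupper.antisymm (hle _ hmem 0 (zero_mem _) hne)⟩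

lemma sum_eq_zero_of_mem_cyclicCode {E : Type*} [Field E] [Algebra F E] {g : F[X]}
    (hg : g ∣ X ^ n - 1) {w : ZMod n → F} (hw : w ∈ cyclicCode n g) {T : Finset ℕ}
    (hT : ∀ k ∈ T, k < n) {a : ZMod n}
    (hsupp : ∀ j, w j ≠ 0 → j ∈ T.image fun k : ℕ => a + k) {x : E} (hx : aeval x g = 0) :
    ∑ k ∈ T, algebraMap F E (w (a + k)) * x ^ k = 0 := by
  have hmem := shift_mem_cyclicCode hg hw (-a)
  have hroot := aeval_eq_zero_of_dvd_aeval_eq_zero (mem_cyclicCode.1 hmem) hx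
  rw [aeval_polyOf_of_support_subset x hT] at hroot
  · simpa only [sub_neg_eq_add, add_comm] using hroot
  · intro j hj
    obtain ⟨k, hk, hkj⟩ := Finset.mem_image.1 (hsupp _ hj)
    have hjk : (k : ZMod n) = j := add_left_cancel (hkj.trans (by ring))
    rwa [← hjk, ZMod.val_cast_of_lt (hT k hk)]

end MinPairDist

section BCHCode

variable {n : ℕ} [NeZero n] {F E : Type*} [Field F] [Field E] [Algebra F E] {δ : E} {b c : F}

lemma aeval_bchGenerator_self : aeval δ (bchGenerator F δ) = 0 := by
  simp [bchGenerator]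

lemma aeval_bchGenerator_inv : aeval δ⁻¹ (bchGenerator F δ) = 0 := by
  simp [bchGenerator]

lemma aeval_bchGenerator_one : aeval (1 : E) (bchGenerator F δ) = 0 := by
  simp [bchGenerator]

lemma three_lt_hammingNorm [DecidableEq F] (hδ : orderOf δ = n) {w : ZMod n → F}
    (hw : w ∈ cyclicCode n (bchGenerator F δ)) (hw0 : w ≠ 0) : 3 < hammingNorm w := by
  have hδ0 : δ ≠ 0 := (orderOf_pos_iff.1 (hδ ▸ NeZero.pos n)).isUnit.ne_zero
  refine lt_hammingNorm_of_aeval_polyOf_eq_zero (inv_ne_zero hδ0) hδ hw0 fun k hk => ?_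
  refine aeval_eq_zero_of_dvd_aeval_eq_zero (mem_cyclicCode.1 hw) ?_
  interval_cases k
  · rw [pow_zero, mul_one, aeval_bchGenerator_inv]
  · rw [pow_one, inv_mul_cancel₀ hδ0, aeval_bchGenerator_one]
  · rw [pow_two, inv_mul_cancel_left₀ hδ0, aeval_bchGenerator_self]

lemma not_support_eq_image_zero_one_two (hmin : minpoly F δ = X ^ 2 - C b * X - C c) (hc : c ≠ -1)
    (hg : bchGenerator F δ ∣ X ^ n - 1) (hδ1 : δ ≠ 1)
    {w : ZMod n → F} (hw : w ∈ cyclicCode n (bchGenerator F δ)) {a : ZMod n} {i : ℕ} (hi : 3 ≤ i)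
    (hin : i < n) :
    ¬ ∀ j, w j ≠ 0 ↔ j ∈ ({0, 1, 2, i} : Finset ℕ).image fun k : ℕ => a + k := by
  intro hsupp
  have hrel {x : E} (hx : aeval x (bchGenerator F δ) = 0) :
      algebraMap F E (w a) + algebraMap F E (w (a + 1)) * x + algebraMap F E (w (a + 2)) * x ^ 2 +
        algebraMap F E (w (a + i)) * x ^ i = 0 := by
    have hsum := sum_eq_zero_of_mem_cyclicCode hg hw (by grind) (fun j => (hsupp j).1) hx
    rw [Finset.sum_insert (by grind), Finset.sum_insert (by grind),
      Finset.sum_insert (by grind), Finset.sum_singleton] at hsum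
    simpa [add_assoc] using hsum
  have hind := linearIndependent_one_of_natDegree_minpoly_eq_two (natDegree_minpoly_eq_two hmin)
  have hδ0 : δ ≠ 0 := hind.ne_zero 1
  have hcoef := mul_mul_sq_add_one_eq hδ0 hδ1 (pow_ne_zero i hδ0)
    (by simpa using hrel aeval_bchGenerator_one) (hrel aeval_bchGenerator_self)
    (by simpa using hrel aeval_bchGenerator_inv)
  rw [sq_eq_of_minpoly_eq hmin] at hcoef
  have hcomb : (w a * w (a + 2) * (c + 1)) • (1 : E) + (w a * w (a + 2) * b -
      (w (a + i) * (w a + w (a + 2)) + w a ^ 2 + w (a + 2) ^ 2)) • δ = 0 := by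
    simp only [Algebra.smul_def, map_mul, map_add, map_sub, map_pow, map_one]
    linear_combination hcoef
  have hzero := (LinearIndependent.pair_iff.1 hind _ _ hcomb).1
  have hwa : w a ≠ 0 := (hsupp a).2 (Finset.mem_image.2 ⟨0, by simp⟩)
  have hwa2 : w (a + 2) ≠ 0 := (hsupp _).2 (Finset.mem_image.2 ⟨2, by simp⟩)
  exact mul_ne_zero (mul_ne_zero hwa hwa2) (fun h => hc (eq_neg_of_add_eq_zero_left h)) hzero

lemma not_linearIndependent_of_support_eq_image (hg : bchGenerator F δ ∣ X ^ n - 1)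
    (hδ : orderOf δ = n) {w : ZMod n → F} (hw : w ∈ cyclicCode n (bchGenerator F δ))
    {a : ZMod n} {i : ℕ} (hi : 3 ≤ i) (hin : i + 1 < n)
    (hsupp : ∀ j, w j ≠ 0 ↔ j ∈ ({0, 1, i, i + 1} : Finset ℕ).image fun k : ℕ => a + k) :
    ¬ LinearIndependent F ![1 - δ ^ i * δ, δ - δ ^ i] := by
  have hrel {x : E} (hx : aeval x (bchGenerator F δ) = 0) :
      algebraMap F E (w a) + algebraMap F E (w (a + 1)) * x + algebraMap F E (w (a + i)) * x ^ i +
        algebraMap F E (w (a + (i + 1))) * (x ^ i * x) = 0 := by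
    have hsum := sum_eq_zero_of_mem_cyclicCode hg hw (by grind) (fun j => (hsupp j).1) hx
    rw [Finset.sum_insert (by grind), Finset.sum_insert (by grind),
      Finset.sum_insert (by grind), Finset.sum_singleton] at hsum
    simpa [add_assoc, pow_succ] using hsum
  have hδ0 : δ ≠ 0 := (orderOf_pos_iff.1 (hδ ▸ NeZero.pos n)).isUnit.ne_zero
  have hpow {k : ℕ} (hk : k ≠ 0) (hkn : k < n) : δ ^ k ≠ 1 :=
    pow_ne_one_of_lt_orderOf hk (hkn.trans_eq hδ.symm)
  have hone : algebraMap F E (w a) + algebraMap F E (w (a + 1)) + algebraMap F E (w (a + i)) +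
      algebraMap F E (w (a + (i + 1))) = 0 := by
    simpa using hrel aeval_bchGenerator_one
  have hδrel := hrel aeval_bchGenerator_self
  have houter := add_eq_zero_of_relations hδ0 (by simpa using hpow one_ne_zero (by omega))
    (pow_ne_zero i hδ0) (hpow (by omega) (by omega)) hone hδrel
    (by simpa using hrel aeval_bchGenerator_inv)
  intro hind
  have hcomb : w a • (1 - δ ^ i * δ) + w (a + 1) • (δ - δ ^ i) = 0 := by
    simp only [Algebra.smul_def]
    linear_combination hδrel - δ ^ i * hone + (δ ^ i - δ ^ i * δ) * houter
  have hwa : w a ≠ 0 := (hsupp a).2 (Finset.mem_image.2 ⟨0, by simp⟩)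
  exact hwa (LinearIndependent.pair_iff.1 hind _ _ hcomb).1

end BCHCode

section BCHCode

variable {n : ℕ} [NeZero n] {F E : Type*} [Field F] [DecidableEq F] [Field E] [Algebra F E]
  {δ : E} {b c : F}

lemma hammingNorm_eq_four_of_pairDist_le_six (hdeg : (minpoly F δ).natDegree = 2)
    (hg : bchGenerator F δ ∣ X ^ n - 1) (hδ : orderOf δ = n) (hn : 7 ≤ n) {w : ZMod n → F}
    (hw : w ∈ cyclicCode n (bchGenerator F δ)) (hw0 : w ≠ 0) (hle : pairDist w 0 ≤ 6) :
    hammingNorm w = 4 ∧ (arcStarts (Finset.univ.filter fun j => w j ≠ 0)).card = 2 := by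
  set S := Finset.univ.filter fun j => w j ≠ 0
  have hpair : pairDist w 0 = S.card + (arcStarts S).card := pairDist_eq_card_add_card_arcStarts w 0
  have hcard : 3 < S.card := three_lt_hammingNorm hδ hw hw0
  have hstarts : 0 < (arcStarts S).card := Finset.card_pos.2 <|
    arcStarts_nonempty (Finset.card_pos.1 (by omega)) (by omega)
  have hstarts_ne : (arcStarts S).card ≠ 1 := fun h1 => by
    obtain ⟨a, ha⟩ := Finset.card_eq_one.1 h1
    refine hw0 (eq_zero_of_mem_cyclicCode_of_support hg hw (a := a) fun j hj => ?_)
    have hval := val_sub_lt_card_of_arcStarts_subset ha.subset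
      (Finset.mem_filter.2 ⟨Finset.mem_univ j, hj⟩)
    have hint := isIntegral_of_natDegree_minpoly_eq_two hdeg
    rw [natDegree_bchGenerator hint, hdeg]
    omega
  exact ⟨show S.card = 4 by omega, by omega⟩

lemma exists_not_linearIndependent_of_pairDist_le_six
    (hmin : minpoly F δ = X ^ 2 - C b * X - C c) (hc : c ≠ -1)
    (hg : bchGenerator F δ ∣ X ^ n - 1) (hδ : orderOf δ = n) (hn : 7 ≤ n) {w : ZMod n → F}
    (hw : w ∈ cyclicCode n (bchGenerator F δ)) (hw0 : w ≠ 0) (hle : pairDist w 0 ≤ 6) :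
    ∃ i, 3 ≤ i ∧ i ≤ n - 3 ∧ ¬ LinearIndependent F ![1 - δ ^ i * δ, δ - δ ^ i] := by
  obtain ⟨hcard, hstarts⟩ := hammingNorm_eq_four_of_pairDist_le_six
    (natDegree_minpoly_eq_two hmin) hg hδ hn hw hw0 hle
  obtain ⟨a, i, hi, ⟨hin, hS⟩ | ⟨hin, hS⟩⟩ :=
    exists_eq_image_of_card_eq_four (by omega) hcard hstarts
  · have hδ1 : δ ≠ 1 := by
      rintro rfl
      rw [orderOf_one] at hδ
      omega
    exact absurd (fun j => (Finset.mem_filter_univ j).symm.trans (Finset.ext_iff.1 hS j))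
      (not_support_eq_image_zero_one_two hmin hc hg hδ1 hw hi hin)
  · exact ⟨i, hi, hin, not_linearIndependent_of_support_eq_image hg hδ hw hi (by omega)
      fun j => (Finset.mem_filter_univ j).symm.trans (Finset.ext_iff.1 hS j)⟩

lemma pairDist_vecOf_le_six (x y : F) (i : ℕ) :
    pairDist (vecOf n (C x + C y * X - C y * X ^ i - C x * X ^ (i + 1))) 0 ≤ 6 := by
  refine (pairDist_le_card_union (T := {0, 1, (i : ZMod n), (i : ZMod n) + 1})
    fun j hj => ?_).trans ?_
  · have hval : j.val = 0 ∨ j.val = 1 ∨ j.val = i ∨ j.val = i + 1 := by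
      contrapose! hj
      simp [vecOf, coeff_X, coeff_C, coeff_X_pow, hj, hj.2.1.symm]
    rw [← ZMod.natCast_zmod_val j]
    rcases hval with h | h | h | h <;> simp [h]
  · refine (Finset.card_le_card (t := {-1, 0, 1, (i : ZMod n) - 1, (i : ZMod n), (i : ZMod n) + 1})
      fun j hj => ?_).trans Finset.card_le_six
    simp only [Finset.mem_union, Finset.mem_image, Finset.mem_insert, Finset.mem_singleton] at hj ⊢
    grind

lemma exists_pairDist_le_six_of_not_linearIndependent (hδint : IsIntegral F δ)
    (hδ1 : δ ≠ 1) (hinv : minpoly F δ⁻¹ ≠ minpoly F δ) {i : ℕ} (hi : 2 ≤ i) (hin : i + 1 < n)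
    (hdep : ¬ LinearIndependent F ![1 - δ ^ i * δ, δ - δ ^ i]) :
    ∃ w ∈ cyclicCode n (bchGenerator F δ), w ≠ 0 ∧ pairDist w 0 ≤ 6 := by
  obtain ⟨x, y, hxy, hne⟩ : ∃ x y : F, x • (1 - δ ^ i * δ) + y • (δ - δ ^ i) = 0 ∧
      (x = 0 → y ≠ 0) := by
    simpa only [LinearIndependent.pair_iff, not_forall, not_and, exists_prop] using hdep
  set p : F[X] := C x + C y * X - C y * X ^ i - C x * X ^ (i + 1)
  have hδ0 : δ ≠ 0 := by
    rintro rfl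
    exact hinv (by rw [inv_zero])
  refine ⟨vecOf n p, vecOf_mem_cyclicCode ?_ ?_, fun h0 => ?_, pairDist_vecOf_le_six x y i⟩
  · refine (degree_le_of_natDegree_le (n := i + 1) ?_).trans_lt (by exact_mod_cast hin)
    simp only [p]
    compute_degree!
  · simp only [Algebra.smul_def] at hxy
    simp only [bchGenerator_dvd_iff hδint hδ1 hinv, p, map_sub, map_add, map_mul, map_pow, aeval_C,
      aeval_X, one_pow]
    refine ⟨?_, by ring, by linear_combination hxy⟩
    have hone : δ⁻¹ * δ = 1 := inv_mul_cancel₀ hδ0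
    have hpow : δ⁻¹ ^ i * δ ^ i = 1 := by rw [← mul_pow, hone, one_pow]
    linear_combination -(δ⁻¹ ^ i * δ⁻¹) * hxy -
      (algebraMap F E x * δ⁻¹ * δ + algebraMap F E y * δ⁻¹) * hpow +
      (algebraMap F E y * δ⁻¹ ^ i - algebraMap F E x) * hone
  · have hcoeff {k : ℕ} (hk : k < n) : p.coeff k = 0 := by
      simpa only [vecOf, ZMod.val_cast_of_lt hk, Pi.zero_apply] using
        congrFun h0 (k : ZMod n)
    have hx : x = 0 := by
      simpa [p, coeff_X_pow, show 0 ≠ i by omega] using hcoeff (k := 0) (by omega)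
    have hy : y = 0 := by
      simpa [p, coeff_X_pow, coeff_C, hx, show 1 ≠ i by omega] using hcoeff (k := 1) (by omega)
    exact hne hx hy

theorem forall_seven_le_pairDist_iff (hmin : minpoly F δ = X ^ 2 - C b * X - C c) (hc : c ≠ -1)
    (hδ : orderOf δ = n) (hn : 7 ≤ n) :
    (∀ w ∈ cyclicCode n (bchGenerator F δ), w ≠ 0 → 7 ≤ pairDist w 0) ↔
      ∀ i, 3 ≤ i → i ≤ n - 3 → LinearIndependent F ![1 - δ ^ i * δ, δ - δ ^ i] := by
  have hdeg := natDegree_minpoly_eq_two hmin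
  have hint := isIntegral_of_natDegree_minpoly_eq_two hdeg
  have hpow {k : ℕ} (hk : k ≠ 0) (hkn : k < n) : δ ^ k ≠ 1 :=
    pow_ne_one_of_lt_orderOf hk (hkn.trans_eq hδ.symm)
  have hδ1 : δ ≠ 1 := by simpa only [pow_one] using hpow one_ne_zero (by omega)
  have hinv := minpoly_inv_ne hmin (hpow two_ne_zero (by omega)) hc
  have hg := bchGenerator_dvd_X_pow_sub_one hint hδ1 hinv (hδ ▸ pow_orderOf_eq_one δ)
  constructor <;> intro h
  · intro i hi hin
    by_contra hdep
    obtain ⟨w, hw, hw0, hle⟩ := exists_pairDist_le_six_of_not_linearIndependent (n := n) hint hδ1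
      hinv (by omega : 2 ≤ i) (by omega) hdep
    exact (h w hw hw0).not_gt (Nat.lt_succ_of_le hle)
  · intro w hw hw0
    by_contra! hlt
    obtain ⟨i, hi, hin, hdep⟩ := exists_not_linearIndependent_of_pairDist_le_six hmin hc hg hδ hn
      hw hw0 (Nat.le_of_lt_succ hlt)
    exact hdep (h i hi hin)

end BCHCode

section Parameters

lemma seven_le_of_dvd_sq_sub_one {q n : ℕ} (hq : 2 ≤ q) (hodd : Odd n) (hdvd : n ∣ q ^ 2 - 1)
    (hn : q + 1 < n) : 7 ≤ n := by
  by_contra! hlt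
  have hq4 : q ≤ 4 := by omega
  interval_cases q <;> interval_cases n <;> revert hodd hdvd <;> decide

lemma pow_ne_self_of_lt_orderOf {M : Type*} [Monoid M] {x : M} {m : ℕ} (hm1 : 1 < m)
    (hm : m < orderOf x) : x ^ m ≠ x := fun h =>
  hm1.ne' <| pow_injOn_Iio_orderOf hm (hm1.trans hm) (by simpa only [pow_one] using h)

variable {n : ℕ} {F E : Type*} [Field F] [Field E] [Algebra F E] {δ : E} {b c : F}

lemma linearIndependent_iff_coeffCondition (hmin : minpoly F δ = X ^ 2 - C b * X - C c)
    (hδ : orderOf δ = n) (hodd : Odd n) {i : ℕ} (hi : 3 ≤ i) (hin : i + 1 < n) :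
    LinearIndependent F ![1 - δ ^ i * δ, δ - δ ^ i] ↔
      CoeffCondition b c (aCoeff0 b c i) (aCoeff1 b c i) := by
  have hsq := sq_eq_of_minpoly_eq hmin
  have hpow : δ ^ i = algebraMap F E (aCoeff0 b c i) + algebraMap F E (aCoeff1 b c i) * δ := by
    simpa only [Nat.sub_add_cancel (show 2 ≤ i by omega)] using pow_add_two_eq_aCoeff hsq (i - 2)
  have hne {k l : ℕ} (hk : k < n) (hl : l < n) (hkl : k ≠ l) : δ ^ k ≠ δ ^ l := fun h =>
    hkl (pow_injOn_Iio_orderOf (hδ ▸ hk) (hδ ▸ hl) h)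
  rw [linearIndependent_one_sub_mul_iff
    (linearIndependent_one_of_natDegree_minpoly_eq_two (natDegree_minpoly_eq_two hmin)) hsq hpow]
  refine ⟨coeffCondition_of_det_ne_zero, fun h => det_ne_zero_of_coeffCondition h ?_ ?_ ?_⟩
  · intro hB hA
    have hpow_sq : (δ ^ i) ^ 2 = 1 := by
      rw [hpow, hB, map_zero, zero_mul, add_zero, ← map_pow, hA, map_one]
    have hdvd : n ∣ i * 2 := hδ ▸ orderOf_dvd_of_pow_eq_one ((pow_mul δ i 2).trans hpow_sq)
    have hle := Nat.le_of_dvd (by omega) (hodd.coprime_two_right.dvd_of_dvd_mul_right hdvd)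
    omega
  · rintro ⟨hB, hA⟩
    refine hne (k := i) (l := 1) (by omega) (by omega) (by omega) ?_
    rw [hpow, hA, hB, map_zero, map_one, zero_add, one_mul, pow_one]
  · rintro ⟨hBc, hAB⟩
    refine hne (k := i + 1) (l := 0) (by omega) (by omega) (by omega) ?_
    have hBc' := congrArg (algebraMap F E) hBc
    have hAB' := congrArg (algebraMap F E) hAB
    simp only [map_mul, map_add, map_one, map_zero] at hBc' hAB'
    rw [pow_succ, pow_zero]
    linear_combination δ * hpow + algebraMap F E (aCoeff1 b c i) * hsq + hBc' + δ * hAB'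

end Parameters

section FiniteField

variable {n : ℕ} {F E : Type*} [Field F] [Fintype F] [Field E] [Algebra F E] {δ : E} {b c : F}

lemma ne_neg_one_of_minpoly_eq (hmin : minpoly F δ = X ^ 2 - C b * X - C c)
    (hfrob : δ ^ Fintype.card F ≠ δ) (hδ : Fintype.card F + 1 < orderOf δ) : c ≠ -1 := by
  rintro rfl
  refine pow_ne_one_of_lt_orderOf (Nat.succ_ne_zero _) hδ ?_
  rw [pow_card_add_one_eq_neg hmin hfrob, neg_neg, map_one]

lemma setOf_dvd_map_eq_cyclicCode [NeZero n] (hdeg : (minpoly F δ).natDegree = 2)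
    (hfrob : δ ^ Fintype.card F ≠ δ) :
    {w : ZMod n → F | (X - C (δ⁻¹ ^ Fintype.card F)) * (X - C δ⁻¹) * (X - 1) * (X - C δ) *
      (X - C (δ ^ Fintype.card F)) ∣ (polyOf w).map (algebraMap F E)} =
      cyclicCode n (bchGenerator F δ) := by
  ext w
  rw [← map_bchGenerator hdeg hfrob, Set.mem_ofPred_eq, SetLike.mem_coe, mem_cyclicCode,
    Polynomial.map_dvd_map']

lemma orderOf_dvd_card_sq_sub_one (hmin : minpoly F δ = X ^ 2 - C b * X - C c)
    (hfrob : δ ^ Fintype.card F ≠ δ) : orderOf δ ∣ Fintype.card F ^ 2 - 1 := by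
  have hnorm := pow_card_add_one_eq_neg hmin hfrob
  have hc : -c ≠ 0 := fun h0 => hfrob <| by
    rw [h0, map_zero] at hnorm
    rw [eq_zero_of_pow_eq_zero hnorm, zero_pow Fintype.card_ne_zero]
  refine orderOf_dvd_of_pow_eq_one ?_
  rw [← one_pow 2, Nat.sq_sub_sq, pow_mul, hnorm, ← map_pow,
    FiniteField.pow_card_sub_one_eq_one _ hc, map_one]

end FiniteField

end SymbolPair

open SymbolPair in
theorem stmt14_general {q n : ℕ} [NeZero n] {F E : Type*} [Field F] [Fintype F] [DecidableEq F]
    [Field E] [Algebra F E] (hq : Fintype.card F = q) (hodd : Odd n) (hn : q + 1 < n)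
    {δ : E} (hδ : orderOf δ = n) {b c : F} (hmin : minpoly F δ = X ^ 2 - C b * X - C c)
    (Code : Set (ZMod n → F))
    (hCode : Code = {c' : ZMod n → F |
      ((X - C (δ⁻¹ ^ q)) * (X - C δ⁻¹) * (X - 1) * (X - C δ) * (X - C (δ ^ q))) ∣
        (polyOf c').map (algebraMap F E)}) :
    (IsMinPairDist Code 7 ∧ Nat.card Code = q ^ (n - 7 + 2)) ↔
      ∀ i : ℕ, 3 ≤ i → i ≤ n - 3 → CoeffCondition b c (aCoeff0 b c i) (aCoeff1 b c i) := by
  subst hq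
  have hδcard : Fintype.card F + 1 < orderOf δ := hn.trans_eq hδ.symm
  have hfrob := pow_ne_self_of_lt_orderOf Fintype.one_lt_card (Nat.lt_of_succ_lt hδcard)
  have hn7 : 7 ≤ n := seven_le_of_dvd_sq_sub_one Fintype.one_lt_card hodd
    (hδ ▸ orderOf_dvd_card_sq_sub_one hmin hfrob) hn
  have hdeg := natDegree_minpoly_eq_two hmin
  have hgdeg : (bchGenerator F δ).natDegree = 5 := by
    rw [natDegree_bchGenerator (isIntegral_of_natDegree_minpoly_eq_two hdeg), hdeg]
  have hg0 : bchGenerator F δ ≠ 0 := ne_zero_of_natDegree_gt (n := 0) (by omega)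
  have hcard : Nat.card (cyclicCode n (bchGenerator F δ) : Set (ZMod n → F)) =
      Fintype.card F ^ (n - 7 + 2) := by
    rw [show n - 7 + 2 = n - 5 by omega, ← hgdeg, ← Nat.card_eq_fintype_card]
    exact natCard_cyclicCode hg0 (by omega)
  have hmds := isMinPairDist_cyclicCode_iff (n := n) hg0 (by omega)
  rw [hgdeg] at hmds
  rw [hCode, setOf_dvd_map_eq_cyclicCode hdeg hfrob, and_iff_left hcard, hmds,
    forall_seven_le_pairDist_iff hmin (ne_neg_one_of_minpoly_eq hmin hfrob hδcard)
      hδ hn7]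
  exact forall₃_congr fun i hi hin =>
    linearIndependent_iff_coeffCondition hmin hδ hodd hi (by omega)

/-- in the setting of the cyclic code with generator polynomial
`g(x) = (x−δ^{−q})(x−δ^{−1})(x−1)(x−δ)(x−δ^q)`, with `n` odd, `x² − bx − c` the monic
minimal polynomial of `δ` over `F_q`, and minimum Hamming distance `4`, the code is an
`(n,7)_q` MDS symbol-pair code if and only if for every `3 ≤ i ≤ n−3` one of the following
holds: (1) `a₁(i) = 0`; or, when `a₁(i) ≠ 0`: (2) if `a₁(i) = 1`, then `a₀(i) ≠ −b` or
`c = 1`; (3) if `a₀(i) = 0`, then `a₁(i) ≠ 1/c` or `b = 0`; (4) if `a₀(i) ≠ 0` and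
`a₁(i) ≠ 1`, then `a₁(i)c = 1` or `(a₁(i)b + a₀(i))/(a₁(i) − 1) ≠ (a₁(i)c − 1)/a₀(i)`. -/
theorem stmt14 {q n : ℕ} [NeZero n] {F E : Type*} [Field F] [Fintype F] [DecidableEq F]
    [Field E] [Fintype E] [Algebra F E]
    (hq : Fintype.card F = q) (hE : Fintype.card E = q ^ 2)
    (hodd : Odd n) (hdvd : n ∣ q ^ 2 - 1) (hn : q + 1 < n)
    {δ : E} (hδ0 : δ ≠ 0) (hδF : δ ∉ Set.range (algebraMap F E)) (hδ : orderOf δ = n)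
    {b c : F} (hmin : minpoly F δ = X ^ 2 - Polynomial.C b * X - Polynomial.C c)
    (Code : Set (ZMod n → F))
    (hCode : Code = {c' : ZMod n → F |
      ((X - Polynomial.C (δ⁻¹ ^ q)) * (X - Polynomial.C δ⁻¹) * (X - 1) *
        (X - Polynomial.C δ) * (X - Polynomial.C (δ ^ q))) ∣
        (polyOf c').map (algebraMap F E)})
    (hd4 : (∀ c' ∈ Code, c' ≠ 0 → 4 ≤ hammingNorm c') ∧
      ∃ c' ∈ Code, c' ≠ 0 ∧ hammingNorm c' = 4) :
    (IsMinPairDist Code 7 ∧ Nat.card Code = q ^ (n - 7 + 2)) ↔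
      ∀ i : ℕ, 3 ≤ i → i ≤ n - 3 →
        aCoeff1 b c i = 0 ∨
        (aCoeff1 b c i ≠ 0 ∧
          (aCoeff1 b c i = 1 → aCoeff0 b c i ≠ -b ∨ c = 1) ∧
          (aCoeff0 b c i = 0 → aCoeff1 b c i ≠ 1 / c ∨ b = 0) ∧
          (aCoeff0 b c i ≠ 0 ∧ aCoeff1 b c i ≠ 1 →
            aCoeff1 b c i * c = 1 ∨
            (aCoeff1 b c i * b + aCoeff0 b c i) / (aCoeff1 b c i - 1) ≠
              (aCoeff1 b c i * c - 1) / aCoeff0 b c i)) :=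
  stmt14_general hq hodd hn hδ hmin Code hCode
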